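/- arXiv:1303.7015 — 3 statements merged into one kernel-verified Lean document; each statement's English description precedes it below -/
import Mathlib

section
/- For every natural number n ≥ 3, the total number of pairings satisfies P(n+1) = P(n−1) + P1(n). -/
/-- A pairing of a sequence of `n` jobs: a list of block sizes, each 1 or 2,
summing to `n`, with no two adjacent entries both equal to 1. -/
def IsPairing (n : ℕ) (l : List ℕ) : Prop :=
  (∀ x ∈ l, x = 1 ∨ x = 2) ∧ l.sum = n ∧ l.Chain' (fun a b => ¬(a = 1 ∧ b = 1))

/-- `P n`: the total number of pairings of `n`. -/
noncomputable def P (n : ℕ) : ℕ := Nat.card {l : List ℕ // IsPairing n l}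

/-- `P1 n`: the number of pairings of `n` whose first entry is 2. -/
noncomputable def P1 (n : ℕ) : ℕ := Nat.card {l : List ℕ // IsPairing n l ∧ l.head? = some 2}

/-- `P2 n`: the number of pairings of `n` whose first entry is 1. -/
noncomputable def P2 (n : ℕ) : ℕ := Nat.card {l : List ℕ // IsPairing n l ∧ l.head? = some 1}

theorem finite_aux (n : ℕ) : {l : List ℕ | (∀ x ∈ l, x = 1 ∨ x = 2) ∧ l.sum = n}.Finite := by
  induction n using Nat.strong_induction_on with
  | _ n ih =>
    have key : ∀ k, 0 < k → ({l : List ℕ | k ≤ n ∧ (∀ x ∈ l, x = 1 ∨ x = 2) ∧ l.sum = n - k}).Finite := by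
      intro k hk
      by_cases h : k ≤ n
      · exact (ih (n - k) (by omega)).subset (fun l hl => hl.2)
      · refine Set.finite_empty.subset ?_
        rintro l ⟨h1, _⟩
        exact absurd h1 h
    refine ((Set.finite_singleton ([] : List ℕ)).union
      (((key 1 (by omega)).image (List.cons 1)).union ((key 2 (by omega)).image (List.cons 2)))).subset ?_
    rintro l ⟨hl, hs⟩
    cases l with
    | nil => left; rfl
    | cons a t =>
      right
      simp only [List.sum_cons] at hs
      have ht : ∀ x ∈ t, x = 1 ∨ x = 2 := fun x hx => hl x (List.mem_cons_of_mem _ hx)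
      rcases hl a List.mem_cons_self with rfl | rfl
      · left; exact ⟨t, ⟨by omega, ht, by omega⟩, rfl⟩
      · right; exact ⟨t, ⟨by omega, ht, by omega⟩, rfl⟩

theorem finite_pairing (n : ℕ) : {l : List ℕ | IsPairing n l}.Finite :=
  (finite_aux n).subset (fun _ hl => ⟨hl.1, hl.2.1⟩)

theorem cons_two (m : ℕ) (l : List ℕ) : IsPairing (m + 2) (2 :: l) ↔ IsPairing m l := by
  unfold IsPairing List.Chain'
  cases l with
  | nil => simp; omega
  | cons a t =>
    simp only [List.isChain_cons_cons, List.mem_cons, forall_eq_or_imp, List.sum_cons]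
    constructor
    · rintro ⟨⟨_, h, h'⟩, hs, h2, h3⟩
      exact ⟨⟨h, h'⟩, by omega, h3⟩
    · rintro ⟨⟨h, h'⟩, hs, h3⟩
      exact ⟨⟨Or.inr trivial, h, h'⟩, by omega, by omega, h3⟩

theorem cons_one (m : ℕ) (hm : 0 < m) (l : List ℕ) :
    IsPairing (m + 1) (1 :: l) ↔ IsPairing m l ∧ l.head? = some 2 := by
  unfold IsPairing List.Chain'
  cases l with
  | nil => simp; omega
  | cons a t =>
    simp only [List.isChain_cons_cons, List.mem_cons, forall_eq_or_imp, List.sum_cons,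
      List.head?_cons, Option.some.injEq]
    constructor
    · rintro ⟨⟨_, h, h'⟩, hs, h2, h3⟩
      exact ⟨⟨⟨h, h'⟩, by omega, h3⟩, h.resolve_left (fun e => h2 ⟨by trivial, e⟩)⟩
    · rintro ⟨⟨⟨h, h'⟩, hs, h3⟩, h2⟩
      exact ⟨⟨Or.inl trivial, h, h'⟩, by omega, by omega, h3⟩

theorem P_succ_eq_P_pred_add_P1 (n : ℕ) (hn : 3 ≤ n) : P (n + 1) = P (n - 1) + P1 n := by
  obtain ⟨m, rfl⟩ : ∃ m, n = m + 1 := ⟨n - 1, by omega⟩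
  have hset : {l : List ℕ | IsPairing (m + 1 + 1) l} =
      List.cons 2 '' {l | IsPairing m l} ∪
        List.cons 1 '' {l | IsPairing (m + 1) l ∧ l.head? = some 2} := by
    ext l
    constructor
    · intro hl
      cases l with
      | nil => have := hl.2.1; simp at this
      | cons a t =>
        rcases hl.1 a List.mem_cons_self with rfl | rfl
        · right; exact ⟨t, (cons_one (m + 1) (by omega) t).1 hl, rfl⟩
        · left; exact ⟨t, (cons_two m t).1 hl, rfl⟩
    · rintro (⟨t, ht, rfl⟩ | ⟨t, ht, rfl⟩)
      · exact (cons_two m t).2 ht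
      · exact (cons_one (m + 1) (by omega) t).2 ht
  change Set.ncard {l : List ℕ | IsPairing (m + 1 + 1) l} = Set.ncard {l : List ℕ | IsPairing m l}
    + Set.ncard {l : List ℕ | IsPairing (m + 1) l ∧ l.head? = some 2}
  rw [hset, Set.ncard_union_eq ?_ ((finite_pairing m).image _)
    (((finite_pairing (m + 1)).subset (fun _ h => h.1)).image _),
    Set.ncard_image_of_injective _ List.cons_injective,
    Set.ncard_image_of_injective _ List.cons_injective]
  rw [Set.disjoint_left]
  rintro _ ⟨t, _, rfl⟩ ⟨s, _, hs⟩
  simp at hs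
end

section
/- For every natural number n ≥ 4, the total number of pairings satisfies the Padovan-type recurrence P(n+1) = P(n−1) + P(n−2). -/
theorem isPairing_iff (n : ℕ) (l : List ℕ) : IsPairing n l ↔
    (∀ x ∈ l, x = 1 ∨ x = 2) ∧ l.sum = n ∧ l.IsChain (fun a b => ¬(a = 1 ∧ b = 1)) := Iff.rfl

theorem isPairing_two_cons (n : ℕ) (l : List ℕ) : IsPairing (n + 2) (2 :: l) ↔ IsPairing n l := by
  simp only [isPairing_iff]
  cases l with
  | nil => simp [eq_comm]
  | cons a t => simp; grind

theorem isPairing_one_two_cons (n : ℕ) (l : List ℕ) :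
    IsPairing (n + 3) (1 :: 2 :: l) ↔ IsPairing n l := by
  rw [← isPairing_two_cons n l]
  simp only [isPairing_iff]
  simp; grind

theorem pairing_set_eq (m : ℕ) : {l | IsPairing (m + 3) l} =
    (fun l => 2 :: l) '' {l | IsPairing (m + 1) l} ∪
      (fun l => 1 :: 2 :: l) '' {l | IsPairing m l} := by
  ext l
  simp only [Set.mem_union, Set.mem_image, Set.mem_ofPred_eq]
  constructor
  · intro h
    rcases l with _ | ⟨a, l⟩
    · simp [isPairing_iff] at h
    rcases h.1 a (by simp) with rfl | rfl
    · rcases l with _ | ⟨b, l⟩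
      · simp [isPairing_iff] at h
      rcases h.1 b (by simp) with rfl | rfl
      · simp [isPairing_iff] at h
      · exact Or.inr ⟨l, (isPairing_one_two_cons m l).1 h, rfl⟩
    · exact Or.inl ⟨l, (isPairing_two_cons (m + 1) l).1 h, rfl⟩
  · rintro (⟨l, h, rfl⟩ | ⟨l, h, rfl⟩)
    · exact (isPairing_two_cons (m + 1) l).2 h
    · exact (isPairing_one_two_cons m l).2 h

theorem pairing_small (n : ℕ) (hn : n < 3) (l : List ℕ) (h : IsPairing n l) :
    l = [] ∨ l = [1] ∨ l = [2] := by
  rcases l with _ | ⟨a, _ | ⟨b, l⟩⟩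
  · simp
  · have := h.1 a (by simp)
    simpa using this
  · exfalso
    have h1 := h.1 a (by simp)
    have h2 := h.1 b (by simp)
    have h3 := h.2.1
    have h4 := ((isPairing_iff _ _).1 h).2.2
    simp at h3 h4
    omega

theorem pairing_finite (n : ℕ) : {l | IsPairing n l}.Finite := by
  induction n using Nat.strong_induction_on with
  | _ n ih =>
    by_cases hn : n < 3
    · refine Set.Finite.subset (Set.toFinite {[], [1], [2]}) ?_
      intro l h
      simpa using pairing_small n hn l h
    · obtain ⟨m, rfl⟩ : ∃ m, n = m + 3 := ⟨n - 3, by omega⟩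
      rw [pairing_set_eq]
      exact ((ih _ (by omega)).image _).union ((ih _ (by omega)).image _)

theorem P_eq_ncard (n : ℕ) : P n = {l | IsPairing n l}.ncard := rfl

theorem P_padovan (n : ℕ) (hn : 4 ≤ n) : P (n + 1) = P (n - 1) + P (n - 2) := by
  obtain ⟨m, rfl⟩ : ∃ m, n = m + 2 := ⟨n - 2, by omega⟩
  change P (m + 3) = P (m + 1) + P m
  rw [P_eq_ncard, P_eq_ncard, P_eq_ncard, pairing_set_eq, Set.ncard_union_eq ?_
    ((pairing_finite _).image _) ((pairing_finite _).image _)]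
  · rw [Set.ncard_image_of_injective, Set.ncard_image_of_injective]
    · intro a b h
      simpa using h
    · intro a b h
      simpa using h
  · rw [Set.disjoint_left]
    rintro _ ⟨a, _, rfl⟩ ⟨b, _, h⟩
    simp at h
end

section
/- For every natural number n ≥ 4, the number of pairings of a sequence of n+1 jobs whose first part is a singleton equals the total number of pairings of a sequence of n−2 jobs; that is, P2(n+1) = P(n−2). -/
theorem P2_succ_eq_P_sub_two (n : ℕ) (hn : 4 ≤ n) : P2 (n + 1) = P (n - 2) := by
  symm
  unfold P P2
  have key : ∀ t : List ℕ, IsPairing (n - 2) t ↔ IsPairing (n + 1) (1 :: 2 :: t) := by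
    intro t
    have hc : List.IsChain (fun a b : ℕ => ¬(a = 1 ∧ b = 1)) (1 :: 2 :: t) ↔
        List.IsChain (fun a b : ℕ => ¬(a = 1 ∧ b = 1)) t := by
      cases t <;> simp
    unfold IsPairing
    refine and_congr (by simp) (and_congr ?_ hc.symm)
    simp only [List.sum_cons]
    omega
  refine Nat.card_congr (Equiv.ofBijective
    (fun t => ⟨1 :: 2 :: t.1, (key t.1).1 t.2, rfl⟩) ⟨?_, ?_⟩)
  · intro a b h
    simpa [Subtype.ext_iff] using h
  · rintro ⟨l, hl, hh⟩
    match l, hl, hh with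
    | [], hl, hh => simp at hh
    | [a], hl, hh =>
      have := hl.1 a (by simp)
      have h2 := hl.2.1
      simp at h2
      omega
    | a :: b :: t, hl, hh =>
      have ha : a = 1 := by simpa using hh
      subst ha
      have hb : b = 2 := by
        have h1 := hl.1 b (by simp)
        have h2 : List.IsChain (fun a b : ℕ => ¬(a = 1 ∧ b = 1)) (1 :: b :: t) := hl.2.2
        rw [List.isChain_cons_cons] at h2
        have := h2.1
        omega
      subst hb
      exact ⟨⟨t, (key t).2 hl⟩, rfl⟩
end
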